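/- arXiv:2605.21829 — 2 statements merged into one kernel-verified Lean document; each statement's English description precedes it below -/
import Mathlib

section
/- Let α be a finite nonempty type with cardinality N, and let f : α → List (Fin 3) be a prefix-free code, i.e., for all distinct a, b in α, f a is not a prefix of f b. Then ∑_{a ∈ α} (f a).length ≥ N · log₃(N), where log₃ denotes the base-3 logarithm (Real.logb 3). -/
/-!
Kraft's inequality bounds the sum of `3 ^ (-ℓ a)` over the codeword lengths `ℓ a` by `1`, so these
numbers form a subprobability distribution `q`. By Gibbs' inequality the cross entropy of any
weights relative to `q`, which is their average codeword length in base `3`, is at least their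
entropy; equal weights give `log₃ N`.
-/

open Finset InformationTheory

section PrefixFree

variable {A ι : Type*}

theorem eq_of_append_eq_append_of_isAntichain_prefix {S : Set (List A)}
    (hS : IsAntichain (· <+: ·) S) {u v x y : List A} (hu : u ∈ S) (hv : v ∈ S)
    (h : u ++ x = v ++ y) : u = v := by
  have hu_prefix : u <+: v ++ y := ⟨x, h⟩
  have hv_prefix : v <+: v ++ y := List.prefix_append v y
  exact (List.prefix_or_prefix_of_prefix hu_prefix hv_prefix).elim (hS.eq hu hv) (hS.eq' hu hv)

theorem uniquelyDecodable_of_isAntichain_prefix {S : Set (List A)}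
    (hS : IsAntichain (· <+: ·) S) (hnil : [] ∉ S) : UniquelyDecodable S := by
  have flatten_ne_nil {u : List A} {L : List (List A)} (hu : u ∈ S) : (u :: L).flatten ≠ [] := by
    intro h
    obtain ⟨rfl, -⟩ := List.append_eq_nil_iff.mp h
    exact hnil hu
  intro L₁
  induction L₁ with
  | nil =>
    rintro (_ | ⟨v, L₂⟩) _ h₂ h
    · rfl
    · exact absurd h.symm (flatten_ne_nil (List.forall_mem_cons.mp h₂).1)
  | cons u L₁ ih =>
    rintro (_ | ⟨v, L₂⟩) h₁ h₂ h <;> obtain ⟨hu, hL₁⟩ := List.forall_mem_cons.mp h₁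
    · exact absurd h (flatten_ne_nil hu)
    · obtain ⟨hv, hL₂⟩ := List.forall_mem_cons.mp h₂
      obtain rfl := eq_of_append_eq_append_of_isAntichain_prefix hS hu hv h
      rw [ih L₂ hL₁ hL₂ (List.append_cancel_left h)]

theorem kraft_inequality_of_isAntichain_prefix [Fintype A] [Nonempty A] {S : Finset (List A)}
    (hS : IsAntichain (· <+: ·) (S : Set (List A))) :
    ∑ w ∈ S, (1 / Fintype.card A : ℝ) ^ w.length ≤ 1 := by
  by_cases hnil : [] ∈ S
  · have hS_eq : S = {[]} :=
      eq_singleton_iff_unique_mem.mpr ⟨hnil, fun w hw ↦ hS.eq' hw hnil w.nil_prefix⟩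
    simp [hS_eq]
  · exact kraft_mcmillan_inequality (uniquelyDecodable_of_isAntichain_prefix hS hnil)

theorem kraft_inequality_of_pairwise_not_prefix [Fintype A] [Nonempty A] [Fintype ι]
    {f : ι → List A} (hf : Pairwise fun a b ↦ ¬ f a <+: f b) :
    ∑ a, (1 / Fintype.card A : ℝ) ^ (f a).length ≤ 1 := by
  classical
  have hf_inj : f.Injective := fun a b hab ↦ by_contra fun hne ↦ hf hne (hab ▸ List.prefix_rfl)
  have hanti : IsAntichain (· <+: ·) (univ.image f : Set (List A)) := by
    rw [coe_image, coe_univ, Set.image_univ]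
    rintro _ ⟨a, rfl⟩ _ ⟨b, rfl⟩ hne
    exact hf (ne_of_apply_ne f hne)
  simpa only [sum_image hf_inj.injOn] using kraft_inequality_of_isAntichain_prefix hanti

end PrefixFree

theorem mul_log_div_add_mul_log_le {p P q : ℝ} (hp : 0 ≤ p) (hP : p ≤ P) (hq : 0 < q) :
    p * Real.log (P / p) + p * Real.log q ≤ P * q - p := by
  obtain rfl | hp := hp.eq_or_lt
  · simpa using mul_nonneg hP hq.le
  have hP_pos : 0 < P := hp.trans_le hP
  calc p * Real.log (P / p) + p * Real.log q
      = p * Real.log (P / p * q) := by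
        rw [Real.log_mul (by positivity) hq.ne', mul_add]
    _ ≤ p * (P / p * q - 1) := by
        gcongr
        exact Real.log_le_sub_one_of_pos (by positivity)
    _ = P * q - p := by field_simp

theorem gibbs_inequality_of_sum_le_one {ι : Type*} {s : Finset ι} {p q : ι → ℝ}
    (hp : ∀ a ∈ s, 0 ≤ p a) (hq : ∀ a ∈ s, 0 < q a) (hq_sum : ∑ a ∈ s, q a ≤ 1) :
    ∑ a ∈ s, p a * Real.log ((∑ b ∈ s, p b) / p a) ≤ -∑ a ∈ s, p a * Real.log (q a) := by
  set P := ∑ b ∈ s, p b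
  have hpointwise : ∑ a ∈ s, (p a * Real.log (P / p a) + p a * Real.log (q a)) ≤
      ∑ a ∈ s, (P * q a - p a) :=
    sum_le_sum fun a ha ↦
      mul_log_div_add_mul_log_le (hp a ha) (single_le_sum hp ha) (hq a ha)
  rw [sum_add_distrib, sum_sub_distrib, ← mul_sum] at hpointwise
  have hP_mul : P * ∑ a ∈ s, q a ≤ P := mul_le_of_le_one_right (sum_nonneg hp) hq_sum
  linarith

/-- The converse half of Shannon's source coding theorem, with unnormalized frequencies `p`;
`p = 1` is the uniform distribution. -/
theorem ternary_prefix_free_total_length_general {A ι : Type*} [Fintype A] [Nontrivial A]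
    [Fintype ι] {f : ι → List A} (hf : Pairwise fun a b ↦ ¬ f a <+: f b)
    {p : ι → ℝ} (hp : ∀ a, 0 ≤ p a) :
    ∑ a, p a * Real.logb (Fintype.card A) ((∑ b, p b) / p a) ≤ ∑ a, p a * (f a).length := by
  have hlog_pos : 0 < Real.log (Fintype.card A) :=
    Real.log_pos (mod_cast Fintype.one_lt_card)
  have hgibbs := gibbs_inequality_of_sum_le_one (fun a _ ↦ hp a) (fun a _ ↦ by positivity)
    (kraft_inequality_of_pairwise_not_prefix hf)
  simp only [Real.logb, ← mul_div_assoc, ← sum_div]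
  rw [div_le_iff₀ hlog_pos]
  simpa only [one_div, Real.log_pow, Real.log_inv, mul_neg, sum_neg_distrib, neg_neg,
    ← mul_assoc, ← sum_mul] using hgibbs

theorem ternary_prefix_free_total_length (α : Type*) [Fintype α] [Nonempty α]
    (N : ℕ) (hN : Fintype.card α = N) (f : α → List (Fin 3))
    (hpf : ∀ a b : α, a ≠ b → ¬ (f a <+: f b)) :
    ∑ a : α, ((f a).length : ℝ) ≥ (N : ℝ) * Real.logb 3 N := by
  simpa [hN] using
    ternary_prefix_free_total_length_general (fun a b ↦ hpf a b) (p := 1) fun _ ↦ zero_le_one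
end

section
/- Let n be a positive natural number and π a permutation of Fin n. Then the number of tuples (σ_0, σ_1, …, σ_{n−1}) of permutations of Fin n such that for every i : Fin n: σ_i(π⁻¹(i)) = i and, for every p : Fin n, σ_i(p) < i ↔ π(p) < i, equals ∏_{i=0}^{n−1} i! · (n − 1 − i)!. In particular, this count is the same for every permutation π. -/
open Nat

/-!
The condition on a single permutation `σ i` says that `σ i p` and `π p` compare in the same way
with `i`, for every `p`. Hence `σ i` differs from `π` by a permutation of the positions that
preserves the three blocks below, at and above `i`, and such a permutation is a choice of a
permutation of each block. The conditions for different `i` are independent, so the counts multiply.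
-/

section

variable {α β ι : Type*}

theorem card_equiv_comp_eq_comp [Finite α] [Fintype ι] (f : α → ι) (π : β ≃ α) :
    Nat.card {σ : β ≃ α // f ∘ σ = f ∘ π} = ∏ k, (f ⁻¹' {k}).ncard ! := by
  have comp_eq_iff (σ : β ≃ α) : f ∘ σ = f ∘ π ↔ f ∘ π.symm.trans σ = f := by
    rw [Equiv.coe_trans, ← Function.comp_assoc, Equiv.comp_symm_eq]
  calc Nat.card {σ : β ≃ α // f ∘ σ = f ∘ π}
      = Nat.card {τ : Equiv.Perm α // f ∘ τ = f} :=
        Nat.card_congr ((π.equivCongr (Equiv.refl α)).subtypeEquiv comp_eq_iff)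
    _ = ∏ k, (f ⁻¹' {k}).ncard ! := DomMulAct.stabilizer_ncard f

end

section

variable {α β : Type*} [LinearOrder α]

theorem prod_factorial_ncard_preimage_cmp (i : α) :
    ∏ o, ((cmp · i) ⁻¹' {o}).ncard ! = (Set.Iio i).ncard ! * (Set.Ioi i).ncard ! := by
  have preimage_lt : (cmp · i) ⁻¹' {.lt} = Set.Iio i := by ext; simp
  have preimage_eq : (cmp · i) ⁻¹' {.eq} = {i} := by ext; simp
  have preimage_gt : (cmp · i) ⁻¹' {.gt} = Set.Ioi i := by ext; simp
  have univ_ordering : (Finset.univ : Finset Ordering) = {.lt, .eq, .gt} := rfl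
  simp [univ_ordering, preimage_lt, preimage_eq, preimage_gt]

theorem cmp_eq_cmp_iff [LinearOrder β] {a b : α} {c d : β} :
    cmp a b = cmp c d ↔ (a = b ↔ c = d) ∧ (a < b ↔ c < d) := by
  refine ⟨fun h ↦ ⟨eq_iff_eq_of_cmp_eq_cmp h, lt_iff_lt_of_cmp_eq_cmp h⟩, fun ⟨heq, hlt⟩ ↦ ?_⟩
  rcases lt_trichotomy a b with h | h | h
  · rw [h.cmp_eq_lt, (hlt.1 h).cmp_eq_lt]
  · rw [h.cmp_eq_eq, (heq.1 h).cmp_eq_eq]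
  · have hdc : d < c := (not_lt.1 (hlt.not.1 h.not_gt)).lt_of_ne' (heq.not.1 h.ne')
    rw [h.cmp_eq_gt, hdc.cmp_eq_gt]

theorem cmp_comp_eq_cmp_comp_iff (σ π : β ≃ α) (i : α) :
    (cmp · i) ∘ σ = (cmp · i) ∘ π ↔ σ (π.symm i) = i ∧ ∀ p, σ p < i ↔ π p < i := by
  have apply_symm_eq_iff : σ (π.symm i) = i ↔ ∀ p, σ p = i ↔ π p = i := by
    refine ⟨fun h p ↦ ?_, fun h ↦ (h _).2 (π.apply_symm_apply i)⟩
    rw [← π.eq_symm_apply, ← σ.apply_eq_iff_eq, h]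
  simp only [apply_symm_eq_iff, funext_iff, Function.comp_apply, cmp_eq_cmp_iff, forall_and]

theorem card_equiv_apply_symm_eq_and_lt_iff_lt [Finite α] (π : β ≃ α) (i : α) :
    Nat.card {σ : β ≃ α // σ (π.symm i) = i ∧ ∀ p, σ p < i ↔ π p < i}
      = (Set.Iio i).ncard ! * (Set.Ioi i).ncard ! := by
  simp only [← cmp_comp_eq_cmp_comp_iff, card_equiv_comp_eq_comp,
    prod_factorial_ncard_preimage_cmp]

theorem count_chunk_tuples_general [Fintype α] (π : β ≃ α) :
    Nat.card {σ : α → (β ≃ α) //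
        ∀ i : α, σ i (π.symm i) = i ∧ ∀ p, σ i p < i ↔ π p < i}
      = ∏ i : α, (Set.Iio i).ncard ! * (Set.Ioi i).ncard ! := by
  rw [Nat.card_congr (Equiv.subtypePiEquivPi
    (p := fun i (τ : β ≃ α) ↦ τ (π.symm i) = i ∧ ∀ p, τ p < i ↔ π p < i)), Nat.card_pi]
  simp only [card_equiv_apply_symm_eq_and_lt_iff_lt]

end

theorem count_chunk_tuples (n : ℕ) (hn : 0 < n) (π : Equiv.Perm (Fin n)) :
    Nat.card {σ : Fin n → Equiv.Perm (Fin n) //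
        ∀ i : Fin n, σ i (π⁻¹ i) = i ∧ ∀ p : Fin n, σ i p < i ↔ π p < i}
      = ∏ i : Fin n, (i : ℕ)! * (n - 1 - (i : ℕ))! := by
  simpa [Set.ncard_eq_toFinset_card'] using count_chunk_tuples_general π
end
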